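/- arXiv:1507.04073 — 3 statements merged into one kernel-verified Lean document; each statement's English description precedes it below -/
import Mathlib

section
/- Let A = [a_1, ..., a_n] be an m×n real matrix and let ρ(A) := max_{z ∈ ℝ^m, ‖z‖₂=1} min_{i=1,...,n} ⟨a_i, z⟩. If ρ(A) ≤ 0, then |ρ(A)| = max{r ≥ 0 : every y ∈ ℝ^m with ‖y‖₂ ≤ r belongs to conv{a_1,...,a_n}}. -/
open scoped RealInnerProductSpace BigOperators

/-!
A ball of radius `r` around `y` lies in a complete convex set `K` exactly when, in every unit
direction `z`, no lower bound of `⟪·, z⟫` on `K` exceeds `⟪y, z⟫ - r`, the minimum of `⟪·, z⟫` on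
the ball: a point outside `K` is separated from `K` by the direction towards its nearest point in
`K`. When `K` is the convex hull of the `a i`, the infimum of `⟪·, z⟫` over `K` is
`⨅ i, ⟪a i, z⟫`, so the ball around `0` lies in `K` if and only if `r ≤ -ρ`.
-/

section ConvexHull

variable {E : Type*} [NormedAddCommGroup E] [InnerProductSpace ℝ E]

theorem exists_norm_eq_one_forall_le_inner_of_notMem {K : Set E} (hne : K.Nonempty)
    (hcomplete : IsComplete K) (hconv : Convex ℝ K) {y : E} (hy : y ∉ K) :
    ∃ z : E, ‖z‖ = 1 ∧ ∃ c, ⟪y, z⟫ < c ∧ ∀ x ∈ K, c ≤ ⟪x, z⟫ := by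
  obtain ⟨p, hpK, hp⟩ := exists_norm_eq_iInf_of_complete_convex hne hcomplete hconv y
  have hobtuse : ∀ x ∈ K, ⟪y - p, x - p⟫ ≤ 0 :=
    (norm_eq_iInf_iff_real_inner_le_zero hconv hpK).1 hp
  have hpos : 0 < ‖p - y‖ := norm_pos_iff.2 (sub_ne_zero.2 fun h => hy (h ▸ hpK))
  refine ⟨‖p - y‖⁻¹ • (p - y), norm_smul_inv_norm (norm_pos_iff.1 hpos),
    ⟪p, ‖p - y‖⁻¹ • (p - y)⟫, ?_, ?_⟩
  · rw [← sub_pos, ← inner_sub_left, real_inner_smul_right, real_inner_self_eq_norm_sq]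
    positivity
  · intro x hx
    rw [← sub_nonneg, ← inner_sub_left, real_inner_smul_right, real_inner_comm,
      ← neg_sub y p, inner_neg_left]
    exact mul_nonneg (by positivity) (neg_nonneg.2 (hobtuse x hx))

theorem closedBall_subset_iff_forall_norm_eq_one {K : Set E} (hne : K.Nonempty)
    (hcomplete : IsComplete K) (hconv : Convex ℝ K) (y : E) {r : ℝ} (hr : 0 ≤ r) :
    Metric.closedBall y r ⊆ K ↔
      ∀ z : E, ‖z‖ = 1 → ∀ c, (∀ x ∈ K, c ≤ ⟪x, z⟫) → c ≤ ⟪y, z⟫ - r := by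
  constructor
  · intro hball z hz c hc
    have hmem : y - r • z ∈ K := hball (by
      rw [mem_closedBall_iff_norm, sub_sub_cancel_left, norm_neg, norm_smul, hz,
        Real.norm_of_nonneg hr, mul_one])
    calc c ≤ ⟪y - r • z, z⟫ := hc _ hmem
      _ = ⟪y, z⟫ - r := by
        rw [inner_sub_left, real_inner_smul_left, real_inner_self_eq_norm_sq, hz, one_pow, mul_one]
  · intro hlower x hx
    by_contra hxK
    obtain ⟨z, hz, c, hxc, hc⟩ :=
      exists_norm_eq_one_forall_le_inner_of_notMem hne hcomplete hconv hxK
    have hyx : ⟪y, z⟫ - ⟪x, z⟫ ≤ r := calc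
      ⟪y, z⟫ - ⟪x, z⟫ = ⟪y - x, z⟫ := (inner_sub_left y x z).symm
      _ ≤ ‖y - x‖ * ‖z‖ := real_inner_le_norm _ _
      _ ≤ r := by rw [hz, mul_one]; exact mem_closedBall_iff_norm'.1 hx
    linarith [hlower z hz c hc]

theorem forall_mem_convexHull_le_inner_iff {s : Set E} {z : E} {c : ℝ} :
    (∀ x ∈ convexHull ℝ s, c ≤ ⟪x, z⟫) ↔ ∀ x ∈ s, c ≤ ⟪x, z⟫ := by
  have hhalfspace : Convex ℝ {x : E | c ≤ ⟪x, z⟫} :=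
    convex_halfSpace_ge ((innerₗ E).flip z).isLinear c
  exact hhalfspace.convexHull_subset_iff

variable {ι : Type*} {a : ι → E}

theorem bddBelow_range_inner (hbdd : Bornology.IsBounded (Set.range a)) (z : E) :
    BddBelow (Set.range fun i => ⟪a i, z⟫) := by
  have himage := ((innerSL ℝ z).lipschitz.isBounded_image hbdd).bddBelow
  rw [← Set.range_comp] at himage
  simpa only [Function.comp_def, innerSL_apply_apply, real_inner_comm] using himage

variable [Nonempty ι]

theorem closedBall_subset_convexHull_range_iff (hbdd : Bornology.IsBounded (Set.range a))
    (hcomplete : IsComplete (convexHull ℝ (Set.range a))) (y : E) {r : ℝ} (hr : 0 ≤ r) :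
    Metric.closedBall y r ⊆ convexHull ℝ (Set.range a) ↔
      ∀ z : E, ‖z‖ = 1 → ⨅ i, ⟪a i, z⟫ ≤ ⟪y, z⟫ - r := by
  rw [closedBall_subset_iff_forall_norm_eq_one (Set.range_nonempty a).convexHull hcomplete
    (convex_convexHull ℝ _) y hr]
  refine forall₂_congr fun z _ => ?_
  simp only [forall_mem_convexHull_le_inner_iff, Set.forall_mem_range,
    ← le_ciInf_iff (bddBelow_range_inner hbdd z), forall_le_iff_le]

theorem closedBall_zero_subset_convexHull_range_iff_le_neg
    (hbdd : Bornology.IsBounded (Set.range a))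
    (hcomplete : IsComplete (convexHull ℝ (Set.range a))) {ρ : ℝ}
    (hρ : IsLUB {t : ℝ | ∃ z : E, ‖z‖ = 1 ∧ t = ⨅ i, ⟪a i, z⟫} ρ) {r : ℝ} (hr : 0 ≤ r) :
    Metric.closedBall 0 r ⊆ convexHull ℝ (Set.range a) ↔ r ≤ -ρ := calc
  Metric.closedBall 0 r ⊆ convexHull ℝ (Set.range a)
    ↔ ∀ z : E, ‖z‖ = 1 → ⨅ i, ⟪a i, z⟫ ≤ -r := by
      simp only [closedBall_subset_convexHull_range_iff hbdd hcomplete 0 hr, inner_zero_left,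
        zero_sub]
  _ ↔ ρ ≤ -r := by
      rw [isLUB_le_iff hρ]
      refine ⟨?_, fun hupper z hz => hupper ⟨z, hz, rfl⟩⟩
      rintro hle _ ⟨z, hz, rfl⟩
      exact hle z hz
  _ ↔ r ≤ -ρ := le_neg

theorem stmt1_general (hbdd : Bornology.IsBounded (Set.range a))
    (hcomplete : IsComplete (convexHull ℝ (Set.range a))) {ρ : ℝ}
    (hρ : IsLUB {t : ℝ | ∃ z : E, ‖z‖ = 1 ∧ t = ⨅ i, ⟪a i, z⟫} ρ) (hρle : ρ ≤ 0) :
    IsGreatest {r : ℝ | 0 ≤ r ∧ ∀ y : E, ‖y‖ ≤ r → y ∈ convexHull ℝ (Set.range a)} |ρ| := by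
  have hIcc : {r : ℝ | 0 ≤ r ∧ ∀ y : E, ‖y‖ ≤ r → y ∈ convexHull ℝ (Set.range a)} =
      Set.Icc 0 (-ρ) := by
    ext r
    refine and_congr_right fun hr => ?_
    simp only [← closedBall_zero_subset_convexHull_range_iff_le_neg hbdd hcomplete hρ hr,
      Set.subset_def, mem_closedBall_zero_iff]
  rw [hIcc, abs_of_nonpos hρle]
  exact isGreatest_Icc (neg_nonneg.2 hρle)

end ConvexHull

/-- If ρ(A) := max_{‖z‖=1} min_i ⟪a_i, z⟫ is nonpositive, then
|ρ(A)| = max {r ≥ 0 : every y with ‖y‖ ≤ r belongs to conv{a_1,…,a_n}}. -/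
theorem stmt1 (m n : ℕ) (hn : 0 < n) (a : Fin n → EuclideanSpace ℝ (Fin m)) (ρ : ℝ)
    (hρ : IsGreatest
      {t : ℝ | ∃ z : EuclideanSpace ℝ (Fin m), ‖z‖ = 1 ∧ t = ⨅ i : Fin n, ⟪a i, z⟫} ρ)
    (hρle : ρ ≤ 0) :
    IsGreatest
      {r : ℝ | 0 ≤ r ∧ ∀ y : EuclideanSpace ℝ (Fin m), ‖y‖ ≤ r →
        y ∈ convexHull ℝ (Set.range a)} |ρ| :=
  have : Nonempty (Fin n) := ⟨⟨0, hn⟩⟩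
  have hfin : (Set.range a).Finite := Set.finite_range a
  stmt1_general hfin.isBounded (hfin.isCompact_convexHull ℝ).isComplete hρ.isLUB hρle
end

section
/- Let A = [a_1, ..., a_n] be an m×n real matrix with ‖a_i‖₂ = 1 for i = 1,...,n, such that 0 ∈ conv{a_1,...,a_n}. Then w(A) ≥ |ρ(A)|, where w(A) is the relative width and ρ(A) := max_{z ∈ ℝ^m, ‖z‖₂=1} min_{i=1,...,n} ⟨a_i, z⟩. -/
open scoped RealInnerProductSpace BigOperators

/-- `comb a x = A x`, the combination `∑ i, x i • a i` of the columns `a i` of `A`. -/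
noncomputable def comb {m n : ℕ} (a : Fin n → EuclideanSpace ℝ (Fin m)) (x : Fin n → ℝ) :
    EuclideanSpace ℝ (Fin m) := ∑ i, x i • a i

/-- The relative width
`w(A) = min_{x ≥ 0, Ax ≠ 0} max {⟪Ax, a ℓ - a j⟫ / ‖Ax‖ : ℓ ∈ S(x), j ∈ {1,…,n}}`. -/
noncomputable def relWidth {m n : ℕ} (a : Fin n → EuclideanSpace ℝ (Fin m)) : ℝ :=
  sInf {t : ℝ | ∃ x : Fin n → ℝ, (∀ i, 0 ≤ x i) ∧ comb a x ≠ 0 ∧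
    t = sSup {s : ℝ | ∃ ℓ j : Fin n, 0 < x ℓ ∧
      s = ⟪comb a x, a ℓ - a j⟫ / ‖comb a x‖}}

/-! Let `A x ≠ 0` with `x ≥ 0`. Since `∑ i, x i * ⟪A x, a i⟫ = ‖A x‖ ^ 2 > 0`, some column `a ℓ`
with `x ℓ > 0` has positive inner product with `A x`. The unit vector in the direction of `A x` is
feasible for the maximum defining `ρ`, so some column `a j` satisfies `⟪A x, a j⟫ ≤ ρ * ‖A x‖`.
Hence `⟪A x, a ℓ - a j⟫ / ‖A x‖ ≥ -ρ`. Finally, `0 ∈ conv(A)` forces `ρ ≤ 0`, that is,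
`|ρ| = -ρ`. -/

theorem exists_nonneg_sum_smul_ne_zero {ι R M : Type*} [Fintype ι] [Semiring R] [PartialOrder R]
    [ZeroLEOneClass R] [AddCommMonoid M] [Module R M] {a : ι → M} (ha : a ≠ 0) :
    ∃ x : ι → R, (∀ i, 0 ≤ x i) ∧ ∑ i, x i • a i ≠ 0 := by
  classical
  obtain ⟨i, hi⟩ := Function.ne_iff.1 ha
  have hnonneg : (0 : ι → R) ≤ Pi.single i 1 := Pi.single_nonneg.2 zero_le_one
  exact ⟨Pi.single i 1, hnonneg, by simpa [Pi.single_apply] using hi⟩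

section InnerProductSpace

variable {ι E : Type*} [NormedAddCommGroup E] [InnerProductSpace ℝ E] {a : ι → E}

theorem iInf_inner_le_inner_of_mem_convexHull [Finite ι] {p : E}
    (hp : p ∈ convexHull ℝ (Set.range a)) (z : E) : ⨅ i, ⟪a i, z⟫ ≤ ⟪p, z⟫ := by
  have hconcave : ConcaveOn ℝ (convexHull ℝ (Set.range a)) fun y => ⟪y, z⟫ :=
    ((innerₗ E).flip z).concaveOn (convex_convexHull ℝ _)
  obtain ⟨_, ⟨i, rfl⟩, hi⟩ := hconcave.exists_le_of_mem_convexHull (subset_convexHull ℝ _) hp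
  exact (ciInf_le (Set.finite_range _).bddBelow i).trans hi

theorem exists_inner_le_mul_norm [Finite ι] [Nonempty ι] {ρ : ℝ}
    (hρ : ∀ z : E, ‖z‖ = 1 → ⨅ i, ⟪a i, z⟫ ≤ ρ) {u : E} (hu : u ≠ 0) :
    ∃ j, ⟪u, a j⟫ ≤ ρ * ‖u‖ := by
  obtain ⟨j, hj⟩ := exists_eq_ciInf_of_finite (f := fun i => ⟪a i, ‖u‖⁻¹ • u⟫)
  have hle : ⟪a j, ‖u‖⁻¹ • u⟫ ≤ ρ := hj.trans_le (hρ _ (norm_smul_inv_norm (𝕜 := ℝ) hu))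
  rw [real_inner_smul_right, real_inner_comm, inv_mul_le_iff₀ (norm_pos_iff.2 hu), mul_comm] at hle
  exact ⟨j, hle⟩

variable [Fintype ι] {x : ι → ℝ}

theorem exists_pos_and_inner_sum_smul_pos (hx : ∀ i, 0 ≤ x i) (hne : ∑ i, x i • a i ≠ 0) :
    ∃ i, 0 < x i ∧ 0 < ⟪∑ k, x k • a k, a i⟫ := by
  have hsum : 0 < ∑ i, x i * ⟪∑ k, x k • a k, a i⟫ := calc
    0 < ⟪∑ k, x k • a k, ∑ i, x i • a i⟫ := real_inner_self_pos.2 hne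
    _ = ∑ i, x i * ⟪∑ k, x k • a k, a i⟫ := by
      rw [inner_sum]
      simp only [real_inner_smul_right]
  obtain ⟨i, -, hi⟩ : ∃ i ∈ Finset.univ, 0 < x i * ⟪∑ k, x k • a k, a i⟫ :=
    Finset.exists_lt_of_sum_lt (by rwa [Finset.sum_const_zero])
  have hinner : 0 < ⟪∑ k, x k • a k, a i⟫ := pos_of_mul_pos_right hi (hx i)
  exact ⟨i, pos_of_mul_pos_left hi hinner.le, hinner⟩

/-- The quantity `max {⟪A x, a ℓ - a j⟫ / ‖A x‖ : ℓ ∈ S(x), j}` minimised in the relative width,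
for a finite family `a` of columns in a real inner product space. -/
noncomputable def supportWidth (a : ι → E) (x : ι → ℝ) : ℝ :=
  sSup {s : ℝ | ∃ ℓ j : ι, 0 < x ℓ ∧ s = ⟪∑ i, x i • a i, a ℓ - a j⟫ / ‖∑ i, x i • a i‖}

/-- The relative width of a finite family of vectors in a real inner product space; `relWidth` is
the case of `n` vectors in `ℝ^m`. As the infimum of an empty set of reals it is `0` if `a = 0`. -/
noncomputable def familyRelWidth (a : ι → E) : ℝ :=
  sInf {t : ℝ | ∃ x : ι → ℝ, (∀ i, 0 ≤ x i) ∧ ∑ i, x i • a i ≠ 0 ∧ t = supportWidth a x}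

theorem inner_sub_div_norm_le_supportWidth {ℓ : ι} (hℓ : 0 < x ℓ) (j : ι) :
    ⟪∑ i, x i • a i, a ℓ - a j⟫ / ‖∑ i, x i • a i‖ ≤ supportWidth a x := by
  refine le_csSup (Set.Finite.bddAbove ?_) ⟨ℓ, j, hℓ, rfl⟩
  refine (Set.finite_range fun p : ι × ι =>
    ⟪∑ i, x i • a i, a p.1 - a p.2⟫ / ‖∑ i, x i • a i‖).subset ?_
  rintro _ ⟨ℓ, j, -, rfl⟩
  exact ⟨(ℓ, j), rfl⟩

theorem neg_le_supportWidth {ρ : ℝ} (hρ : ∀ z : E, ‖z‖ = 1 → ⨅ i, ⟪a i, z⟫ ≤ ρ)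
    (hx : ∀ i, 0 ≤ x i) (hne : ∑ i, x i • a i ≠ 0) : -ρ ≤ supportWidth a x := by
  obtain ⟨ℓ, hxℓ, hℓ⟩ := exists_pos_and_inner_sum_smul_pos hx hne
  have : Nonempty ι := ⟨ℓ⟩
  obtain ⟨j, hj⟩ := exists_inner_le_mul_norm hρ hne
  refine le_trans ?_ (inner_sub_div_norm_le_supportWidth hxℓ j)
  rw [le_div_iff₀ (norm_pos_iff.2 hne), inner_sub_right]
  linarith

theorem neg_le_familyRelWidth (ha : a ≠ 0) {ρ : ℝ}
    (hρ : ∀ z : E, ‖z‖ = 1 → ⨅ i, ⟪a i, z⟫ ≤ ρ) : -ρ ≤ familyRelWidth a := by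
  obtain ⟨x, hx, hne⟩ := exists_nonneg_sum_smul_ne_zero (R := ℝ) ha
  refine le_csInf ⟨_, x, hx, hne, rfl⟩ ?_
  rintro _ ⟨y, hy, hyne, rfl⟩
  exact neg_le_supportWidth hρ hy hyne

theorem stmt3_general (ha : a ≠ 0) (h0 : (0 : E) ∈ convexHull ℝ (Set.range a)) {ρ : ℝ}
    (hρ : IsLUB {t : ℝ | ∃ z : E, ‖z‖ = 1 ∧ t = ⨅ i, ⟪a i, z⟫} ρ) :
    |ρ| ≤ familyRelWidth a := by
  have hρ_nonpos : ρ ≤ 0 := hρ.2 <| by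
    rintro _ ⟨z, -, rfl⟩
    simpa only [inner_zero_left] using iInf_inner_le_inner_of_mem_convexHull h0 z
  rw [abs_of_nonpos hρ_nonpos]
  exact neg_le_familyRelWidth ha fun z hz => hρ.1 ⟨z, hz, rfl⟩

end InnerProductSpace

theorem relWidth_eq_familyRelWidth {m n : ℕ} (a : Fin n → EuclideanSpace ℝ (Fin m)) :
    relWidth a = familyRelWidth a := rfl

/-- for a matrix with unit columns such that `0 ∈ conv(A)`,
the relative width satisfies `w(A) ≥ |ρ(A)|`. -/
theorem stmt3 (m n : ℕ) (hn : 0 < n) (a : Fin n → EuclideanSpace ℝ (Fin m))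
    (hnorm : ∀ i, ‖a i‖ = 1)
    (h0 : (0 : EuclideanSpace ℝ (Fin m)) ∈ convexHull ℝ (Set.range a)) (ρ : ℝ)
    (hρ : IsGreatest
      {t : ℝ | ∃ z : EuclideanSpace ℝ (Fin m), ‖z‖ = 1 ∧ t = ⨅ i : Fin n, ⟪a i, z⟫} ρ) :
    |ρ| ≤ relWidth a := by
  have ha : a ≠ 0 := Function.ne_iff.2 ⟨⟨0, hn⟩, norm_ne_zero_iff.1 (by simp [hnorm])⟩
  rw [relWidth_eq_familyRelWidth]
  exact stmt3_general ha h0 hρ.isLUB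
end

section
/- Let A = [a_1, ..., a_n] ∈ ℝ^{m×n} with ‖a_i‖₂ = 1 for all i. Consider the von Neumann algorithm with away steps: sequences x_k ∈ Δ_{n−1}, y_k = A x_k, where x_0 is a vertex of Δ_{n−1}, and for each k: j minimizes ⟨a_i, y_k⟩ over i ∈ {1,...,n}, ℓ maximizes ⟨a_i, y_k⟩ over i ∈ S(x_k); if ⟨a_j − y_k, y_k⟩ < ⟨y_k − a_ℓ, y_k⟩ set a := a_j − y_k, u := e_j − x_k, θ_max := 1, otherwise set a := y_k − a_ℓ, u := x_k − e_ℓ, θ_max := (x_k)_ℓ/(1 − (x_k)_ℓ); θ_k minimizes ‖y_k + θ a‖₂ over θ ∈ [0, θ_max]; and x_{k+1} := x_k + θ_k u. If for every iteration i ≤ k the vector A^T y_i has at least one nonpositive component (i.e., the algorithm has not halted), then ‖y_k‖₂² ≤ 8/k for all k ≥ 1. -/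
open scoped RealInnerProductSpace BigOperators

/-- One iteration of the von Neumann algorithm with away steps, mapping `x k` to `x (k+1)`:
`j` minimizes `⟪a i, y k⟫`, `ℓ` maximizes `⟪a i, y k⟫` over the support of `x k`; a regular
step (`d = a j - y k`, `u = e j - x k`, `θmax = 1`) is taken when
`⟪a j - y k, y k⟫ < ⟪y k - a ℓ, y k⟫`, otherwise an away step
(`d = y k - a ℓ`, `u = x k - e ℓ`, `θmax = (x k) ℓ / (1 - (x k) ℓ)`);
`θ` minimizes `‖y k + θ • d‖` over `[0, θmax]` and `x (k+1) = x k + θ • u`. -/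
def VNAwayStep {m n : ℕ} (a : Fin n → EuclideanSpace ℝ (Fin m))
    (x x' : Fin n → ℝ) (y : EuclideanSpace ℝ (Fin m)) : Prop :=
  ∃ (j ℓ : Fin n) (d : EuclideanSpace ℝ (Fin m)) (u : Fin n → ℝ) (θmax θ : ℝ),
    (∀ i, ⟪a j, y⟫ ≤ ⟪a i, y⟫) ∧
    0 < x ℓ ∧ (∀ i, 0 < x i → ⟪a i, y⟫ ≤ ⟪a ℓ, y⟫) ∧
    ((⟪a j - y, y⟫ < ⟪y - a ℓ, y⟫ ∧
        d = a j - y ∧ u = Pi.single j 1 - x ∧ θmax = 1) ∨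
     (¬ (⟪a j - y, y⟫ < ⟪y - a ℓ, y⟫) ∧
        d = y - a ℓ ∧ u = x - Pi.single ℓ 1 ∧ θmax = x ℓ / (1 - x ℓ))) ∧
    0 ≤ θ ∧ θ ≤ θmax ∧
    (∀ θ' : ℝ, 0 ≤ θ' → θ' ≤ θmax → ‖y + θ • d‖ ≤ ‖y + θ' • d‖) ∧
    x' = x + θ • u


/-
Write `Y = ‖y k‖²` and let `R` bound the norms of the `a i`. Before halting, some `⟪a i, y k⟫` is
nonpositive, so both kinds of step move along a direction `d` with `⟪d, y k⟫ ≤ -Y` and `‖d‖ ≤ 2R`.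
If the step length `Y / (2R)²` is admissible, the line search lowers `Y` by at least `Y² / (2R)²`,
while the support gains at most one vertex. Otherwise the line search stops at the end of its
interval; since `Y / (2R)² ≤ 1`, this is an away step, which removes a vertex from the support
without increasing `Y`. A bound `C ≥ 2 (2R)²` on the potential `Y * (k + |S(x k)|)` therefore
persists: the second factor grows by at most two when `Y` decreases by `Y² / (2R)²`, and does not
grow when a vertex is dropped.
-/

section LineSearch

variable {E : Type*} [NormedAddCommGroup E] [InnerProductSpace ℝ E] {y d : E} {c D T θ : ℝ}

lemma norm_add_smul_sq (y d : E) (t : ℝ) :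
    ‖y + t • d‖ ^ 2 = ‖y‖ ^ 2 + 2 * t * ⟪d, y⟫ + t ^ 2 * ‖d‖ ^ 2 := by
  rw [norm_add_sq_real, norm_smul, inner_smul_right, real_inner_comm, mul_pow, Real.norm_eq_abs,
    sq_abs]
  ring

lemma norm_add_smul_sq_le_of_isMinOn (hc : 0 ≤ c) (hdy : ⟪d, y⟫ ≤ -c) (hd : ‖d‖ ≤ D)
    (hT : c / D ^ 2 ≤ T) (hmin : IsMinOn (fun t : ℝ ↦ ‖y + t • d‖) (Set.Icc 0 T) θ) :
    ‖y + θ • d‖ ^ 2 ≤ ‖y‖ ^ 2 - c ^ 2 / D ^ 2 := by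
  set t := c / D ^ 2 with ht
  have ht0 : 0 ≤ t := by positivity
  have hdD : ‖d‖ ^ 2 ≤ D ^ 2 := by gcongr
  have htc : t ^ 2 * D ^ 2 = t * c := by
    rcases eq_or_ne D 0 with rfl | hD
    · simp [ht]
    · rw [ht]; field_simp
  calc ‖y + θ • d‖ ^ 2 ≤ ‖y + t • d‖ ^ 2 := by gcongr; exact hmin ⟨ht0, hT⟩
    _ = ‖y‖ ^ 2 + 2 * t * ⟪d, y⟫ + t ^ 2 * ‖d‖ ^ 2 := norm_add_smul_sq y d t
    _ ≤ ‖y‖ ^ 2 + 2 * t * -c + t ^ 2 * D ^ 2 := by gcongr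
    _ = ‖y‖ ^ 2 - c ^ 2 / D ^ 2 := by rw [htc, ht]; ring

lemma strictAntiOn_norm_add_smul (hdy : ⟪d, y⟫ ≤ -c) (hd : ‖d‖ ≤ D) :
    StrictAntiOn (fun t : ℝ ↦ ‖y + t • d‖) (Set.Icc 0 (c / D ^ 2)) := by
  rintro s ⟨hs0, -⟩ t ⟨-, htc⟩ hst
  have hD : D ≠ 0 := by
    rintro rfl
    norm_num at htc
    linarith
  have htD : t * D ^ 2 ≤ c := (le_div_iff₀ (by positivity)).1 htc
  have hdD : ‖d‖ ^ 2 ≤ D ^ 2 := by gcongr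
  have hslope : 2 * ⟪d, y⟫ + (t + s) * ‖d‖ ^ 2 < 0 := by
    have hle : (t + s) * ‖d‖ ^ 2 ≤ (t + s) * D ^ 2 := by gcongr; linarith
    have hlt : s * D ^ 2 < t * D ^ 2 := by gcongr
    linarith
  refine lt_of_pow_lt_pow_left₀ 2 (norm_nonneg _) ?_
  rw [norm_add_smul_sq, norm_add_smul_sq]
  linarith [mul_neg_of_pos_of_neg (sub_pos.2 hst) hslope]

end LineSearch

section Simplex

variable {ι : Type*} [DecidableEq ι] {x u : ι → ℝ} {T θ : ℝ} {i : ι}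

lemma eq_single_of_mem_stdSimplex [Fintype ι] (hx : x ∈ stdSimplex ℝ ι) (hi : x i = 1) :
    x = Pi.single i 1 := by
  have hrest : ∑ j ∈ Finset.univ.erase i, x j = 0 := by
    linarith [Finset.add_sum_erase Finset.univ x (Finset.mem_univ i), hx.2]
  ext j
  rcases eq_or_ne j i with rfl | hj
  · simpa using hi
  · rw [Pi.single_eq_of_ne hj]
    exact (Finset.sum_eq_zero_iff_of_nonneg fun j _ ↦ hx.1 j).1 hrest j (by simp [hj])

lemma support_add_smul_single_sub_subset (x : ι → ℝ) (i : ι) (t : ℝ) :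
    Function.support (x + t • (Pi.single i 1 - x)) ⊆ insert i (Function.support x) := by
  intro j hj
  by_contra! hji
  simp_all

lemma support_add_smul_sub_single_subset (hi : x i ≠ 0) (t : ℝ) :
    Function.support (x + t • (x - Pi.single i 1)) ⊆ Function.support x := by
  have hflip : x + t • (x - Pi.single i 1) = x + (-t) • (Pi.single i 1 - x) := by module
  rw [hflip, ← Set.insert_eq_of_mem (Function.mem_support.2 hi)]
  exact support_add_smul_single_sub_subset x i (-t)

lemma add_smul_sub_single_mem_stdSimplex [Fintype ι] (hx : x ∈ stdSimplex ℝ ι) (hθ : 0 ≤ θ)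
    (hθi : θ * (1 - x i) ≤ x i) : x + θ • (x - Pi.single i 1) ∈ stdSimplex ℝ ι := by
  refine ⟨fun j ↦ ?_, by simp [Finset.sum_add_distrib, ← Finset.mul_sum, hx.2]⟩
  rcases eq_or_ne j i with rfl | hj
  · simp only [Pi.add_apply, Pi.smul_apply, Pi.sub_apply, Pi.single_eq_same, smul_eq_mul]
    linarith
  · simpa [hj] using add_nonneg (hx.1 j) (mul_nonneg hθ (hx.1 j))

/-- `IsVertexDirection x u T` says that `u` is one of the two directions in which the algorithm
moves the weights `x`, towards some vertex or away from a vertex of the support, and that `T` is the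
bound `θ_max` on its step length. Away from `x = e_i` itself, `u = 0` and `T = 1 / 0 = 0`. -/
def IsVertexDirection (x u : ι → ℝ) (T : ℝ) : Prop :=
  (∃ i, u = Pi.single i 1 - x ∧ T = 1) ∨
    ∃ i, 0 < x i ∧ u = x - Pi.single i 1 ∧ T = x i / (1 - x i)

namespace IsVertexDirection

lemma add_smul_mem_stdSimplex [Fintype ι] (h : IsVertexDirection x u T)
    (hx : x ∈ stdSimplex ℝ ι) (hθ : θ ∈ Set.Icc 0 T) : x + θ • u ∈ stdSimplex ℝ ι := by
  rcases h with ⟨i, rfl, rfl⟩ | ⟨i, -, rfl, rfl⟩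
  · exact (convex_stdSimplex ℝ ι).add_smul_sub_mem hx (single_mem_stdSimplex ℝ i) hθ
  · exact add_smul_sub_single_mem_stdSimplex hx hθ.1 <|
      mul_le_of_le_div₀ (hx.1 i) (sub_nonneg.2 (mem_Icc_of_mem_stdSimplex hx i).2) hθ.2

lemma ncard_support_add_smul_le [Finite ι] (h : IsVertexDirection x u T) (θ : ℝ) :
    (Function.support (x + θ • u)).ncard ≤ (Function.support x).ncard + 1 := by
  rcases h with ⟨i, rfl, -⟩ | ⟨i, hi, rfl, -⟩
  · exact (Set.ncard_le_ncard (support_add_smul_single_sub_subset x i θ)).trans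
      (Set.ncard_insert_le i _)
  · exact (Set.ncard_le_ncard (support_add_smul_sub_single_subset hi.ne' θ)).trans
      (Nat.le_succ _)

lemma ncard_support_add_smul_lt [Fintype ι] (h : IsVertexDirection x u T)
    (hx : x ∈ stdSimplex ℝ ι) (hu : u ≠ 0) (hT : T < 1) :
    (Function.support (x + T • u)).ncard < (Function.support x).ncard := by
  rcases h with ⟨i, -, rfl⟩ | ⟨i, hi, rfl, rfl⟩
  · exact absurd hT (lt_irrefl 1)
  · have hi1 : 1 - x i ≠ 0 := fun h1 ↦
      hu (sub_eq_zero.2 (eq_single_of_mem_stdSimplex hx (sub_eq_zero.1 h1).symm))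
    have hzero : (x + (x i / (1 - x i)) • (x - Pi.single i 1) : ι → ℝ) i = 0 := by
      simp only [Pi.add_apply, Pi.smul_apply, Pi.sub_apply, Pi.single_eq_same, smul_eq_mul]
      field_simp
      ring
    exact Set.ncard_lt_ncard <| (Set.ssubset_iff_of_subset
      (support_add_smul_sub_single_subset hi.ne' _)).2 ⟨i, hi.ne', fun hmem ↦ hmem hzero⟩

end IsVertexDirection

end Simplex

section Comb

variable {m n : ℕ} {a : Fin n → EuclideanSpace ℝ (Fin m)} {R : ℝ} {x u : Fin n → ℝ} {T : ℝ}

lemma comb_eq_linearCombination (a : Fin n → EuclideanSpace ℝ (Fin m)) :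
    comb a = Fintype.linearCombination ℝ a := by
  ext x : 1
  exact (Fintype.linearCombination_apply ℝ a x).symm

lemma comb_add_smul (a : Fin n → EuclideanSpace ℝ (Fin m)) (x u : Fin n → ℝ) (t : ℝ) :
    comb a (x + t • u) = comb a x + t • comb a u := by
  simp only [comb_eq_linearCombination, map_add, map_smul]

lemma comb_sub (a : Fin n → EuclideanSpace ℝ (Fin m)) (x u : Fin n → ℝ) :
    comb a (x - u) = comb a x - comb a u := by
  simp only [comb_eq_linearCombination, map_sub]

lemma comb_single_one (a : Fin n → EuclideanSpace ℝ (Fin m)) (i : Fin n) :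
    comb a (Pi.single i 1) = a i := by
  rw [comb_eq_linearCombination, Fintype.linearCombination_apply_single, one_smul]

lemma norm_comb_le (ha : ∀ i, ‖a i‖ ≤ R) (hx : x ∈ stdSimplex ℝ (Fin n)) : ‖comb a x‖ ≤ R := by
  rw [← mem_closedBall_zero_iff]
  exact (convex_closedBall 0 R).sum_mem (fun i _ ↦ hx.1 i) hx.2 fun i _ ↦
    mem_closedBall_zero_iff.2 (ha i)

lemma IsVertexDirection.norm_comb_le (h : IsVertexDirection x u T) (ha : ∀ i, ‖a i‖ ≤ R)
    (hx : x ∈ stdSimplex ℝ (Fin n)) : ‖comb a u‖ ≤ 2 * R := by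
  rw [two_mul]
  rcases h with ⟨i, rfl, -⟩ | ⟨i, -, rfl, -⟩ <;> rw [comb_sub, comb_single_one]
  · exact norm_sub_le_of_le (ha i) (_root_.norm_comb_le ha hx)
  · exact norm_sub_le_of_le (_root_.norm_comb_le ha hx) (ha i)

end Comb

lemma sub_sq_div_mul_add_two_le {M C Y t : ℝ} (hY : 0 ≤ Y) (hYM : Y ≤ M) (hC : 2 * M ≤ C)
    (ht : Y * t ≤ C) : (Y - Y ^ 2 / M) * (t + 2) ≤ C := by
  rcases (hY.trans hYM).eq_or_lt with rfl | hM
  · have hY0 : Y = 0 := le_antisymm hYM hY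
    simpa [hY0] using hC
  · have hq : 0 ≤ 1 - Y / M := sub_nonneg.2 ((div_le_one hM).2 hYM)
    calc (Y - Y ^ 2 / M) * (t + 2) = (1 - Y / M) * (Y * t + 2 * Y) := by ring
      _ ≤ (1 - Y / M) * (C + 2 * Y) := by gcongr
      _ = C - (C - 2 * M) * (Y / M) - 2 * Y * (Y / M) := by field_simp; ring
      _ ≤ C := by
        have h1 : 0 ≤ (C - 2 * M) * (Y / M) := mul_nonneg (by linarith) (by positivity)
        have h2 : 0 ≤ 2 * Y * (Y / M) := by positivity
        linarith

namespace VNAwayStep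

variable {m n : ℕ} {a : Fin n → EuclideanSpace ℝ (Fin m)} {R : ℝ} {x x' : Fin n → ℝ}

lemma exists_lineSearch (h : VNAwayStep a x x' (comb a x)) :
    ∃ (u : Fin n → ℝ) (T θ : ℝ), IsVertexDirection x u T ∧
      (∀ i, ⟪comb a u, comb a x⟫ ≤ ⟪a i, comb a x⟫ - ‖comb a x‖ ^ 2) ∧ θ ∈ Set.Icc 0 T ∧
      IsMinOn (fun t : ℝ ↦ ‖comb a x + t • comb a u‖) (Set.Icc 0 T) θ ∧ x' = x + θ • u := by
  obtain ⟨j, ℓ, d, u, T, θ, hj, hℓ, -, hdir, hθ0, hθT, hmin, hx'⟩ := h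
  have hj' (i : Fin n) : ⟪a j - comb a x, comb a x⟫ ≤ ⟪a i, comb a x⟫ - ‖comb a x‖ ^ 2 := by
    rw [inner_sub_left, real_inner_self_eq_norm_sq]
    exact sub_le_sub_right (hj i) _
  rcases hdir with ⟨-, rfl, rfl, rfl⟩ | ⟨haway, rfl, rfl, rfl⟩
  · refine ⟨_, _, θ, Or.inl ⟨j, rfl, rfl⟩, ?_, ⟨hθ0, hθT⟩, ?_, hx'⟩ <;>
      rw [comb_sub, comb_single_one]
    · exact hj'
    · exact fun t ht ↦ hmin t ht.1 ht.2
  · refine ⟨_, _, θ, Or.inr ⟨ℓ, hℓ, rfl, rfl⟩, ?_, ⟨hθ0, hθT⟩, ?_, hx'⟩ <;>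
      rw [comb_sub, comb_single_one]
    · exact fun i ↦ (not_lt.1 haway).trans (hj' i)
    · exact fun t ht ↦ hmin t ht.1 ht.2

lemma mem_stdSimplex (h : VNAwayStep a x x' (comb a x)) (hx : x ∈ stdSimplex ℝ (Fin n)) :
    x' ∈ stdSimplex ℝ (Fin n) := by
  obtain ⟨u, T, θ, hu, -, hθ, -, rfl⟩ := h.exists_lineSearch
  exact hu.add_smul_mem_stdSimplex hx hθ

lemma norm_sq_decrease_or_support_drop (h : VNAwayStep a x x' (comb a x))
    (ha : ∀ i, ‖a i‖ ≤ R) (hx : x ∈ stdSimplex ℝ (Fin n)) (hneg : ∃ i, ⟪a i, comb a x⟫ ≤ 0) :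
    (‖comb a x'‖ ^ 2 ≤ ‖comb a x‖ ^ 2 - (‖comb a x‖ ^ 2) ^ 2 / (2 * R) ^ 2 ∧
      (Function.support x').ncard ≤ (Function.support x).ncard + 1) ∨
    (‖comb a x'‖ ^ 2 ≤ ‖comb a x‖ ^ 2 ∧
      (Function.support x').ncard < (Function.support x).ncard) := by
  obtain ⟨u, T, θ, hu, hinner, hθ, hmin, rfl⟩ := h.exists_lineSearch
  obtain ⟨i, hi⟩ := hneg
  have hdescent : ⟪comb a u, comb a x⟫ ≤ -‖comb a x‖ ^ 2 := by linarith [hinner i]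
  have hnorm : ‖comb a u‖ ≤ 2 * R := hu.norm_comb_le ha hx
  rw [comb_add_smul]
  rcases le_or_gt (‖comb a x‖ ^ 2 / (2 * R) ^ 2) T with hlong | hshort
  · exact Or.inl ⟨norm_add_smul_sq_le_of_isMinOn (sq_nonneg _) hdescent hnorm hlong hmin,
      hu.ncard_support_add_smul_le θ⟩
  · have hT0 : 0 ≤ T := hθ.1.trans hθ.2
    have hθT : θ = T := by
      by_contra hne
      exact (strictAntiOn_norm_add_smul hdescent hnorm ⟨hθ.1, hθ.2.trans hshort.le⟩
        ⟨hT0, hshort.le⟩ (lt_of_le_of_ne hθ.2 hne)).not_ge (hmin ⟨hT0, le_rfl⟩)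
    have hT1 : T < 1 := hshort.trans_le <| div_le_one_of_le₀
      (by gcongr; linarith [norm_comb_le ha hx, norm_nonneg (comb a x)]) (sq_nonneg _)
    have hu0 : u ≠ 0 := by
      rintro rfl
      have hy : ‖comb a x‖ ^ 2 ≤ 0 := by simpa [comb] using hdescent
      linarith [div_nonpos_of_nonpos_of_nonneg hy (sq_nonneg (2 * R))]
    refine Or.inr ⟨?_, hθT ▸ hu.ncard_support_add_smul_lt hx hu0 hT1⟩
    have hle : ‖comb a x + θ • comb a u‖ ≤ ‖comb a x‖ := by
      simpa using hmin (Set.left_mem_Icc.2 hT0)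
    gcongr

lemma norm_sq_mul_add_one_add_ncard_support_le {C : ℝ} {k : ℕ}
    (h : VNAwayStep a x x' (comb a x)) (ha : ∀ i, ‖a i‖ ≤ R) (hx : x ∈ stdSimplex ℝ (Fin n))
    (hneg : ∃ i, ⟪a i, comb a x⟫ ≤ 0) (hC : 2 * (2 * R) ^ 2 ≤ C)
    (hpot : ‖comb a x‖ ^ 2 * (k + (Function.support x).ncard) ≤ C) :
    ‖comb a x'‖ ^ 2 * (k + 1 + (Function.support x').ncard) ≤ C := by
  rcases h.norm_sq_decrease_or_support_drop ha hx hneg with ⟨hnorm, hcard⟩ | ⟨hnorm, hcard⟩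
  · have hcard' : ((Function.support x').ncard : ℝ) ≤ (Function.support x).ncard + 1 := by
      exact_mod_cast hcard
    have hbound : ‖comb a x‖ ^ 2 ≤ (2 * R) ^ 2 := by
      gcongr
      linarith [norm_comb_le ha hx, norm_nonneg (comb a x)]
    calc ‖comb a x'‖ ^ 2 * (k + 1 + (Function.support x').ncard)
        ≤ (‖comb a x‖ ^ 2 - (‖comb a x‖ ^ 2) ^ 2 / (2 * R) ^ 2) *
            (k + (Function.support x).ncard + 2) := by
          gcongr ?_ * ?_
          · exact (sq_nonneg _).trans hnorm
          · linarith
      _ ≤ C := sub_sq_div_mul_add_two_le (sq_nonneg _) hbound hC hpot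
  · have hcard' : ((Function.support x').ncard : ℝ) + 1 ≤ (Function.support x).ncard := by
      exact_mod_cast hcard
    calc ‖comb a x'‖ ^ 2 * (k + 1 + (Function.support x').ncard)
        ≤ ‖comb a x‖ ^ 2 * (k + (Function.support x).ncard) := by
          gcongr ?_ * ?_
          linarith
      _ ≤ C := hpot

lemma norm_sq_mul_add_ncard_support_le {C : ℝ} {x : ℕ → Fin n → ℝ} {k : ℕ}
    (hstep : ∀ k, VNAwayStep a (x k) (x (k + 1)) (comb a (x k))) (ha : ∀ i, ‖a i‖ ≤ R)
    (hx : ∀ k, x k ∈ stdSimplex ℝ (Fin n)) (hC : 2 * (2 * R) ^ 2 ≤ C)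
    (h0 : ‖comb a (x 0)‖ ^ 2 * (Function.support (x 0)).ncard ≤ C)
    (hneg : ∀ i < k, ∃ j, ⟪a j, comb a (x i)⟫ ≤ 0) :
    ‖comb a (x k)‖ ^ 2 * (k + (Function.support (x k)).ncard) ≤ C := by
  induction k with
  | zero => simpa using h0
  | succ k ih =>
    rw [Nat.cast_succ]
    exact (hstep k).norm_sq_mul_add_one_add_ncard_support_le ha (hx k) (hneg k k.lt_succ_self) hC
      (ih fun i hi ↦ hneg i (hi.trans k.lt_succ_self))

end VNAwayStep

theorem stmt6_general {m n : ℕ} {a : Fin n → EuclideanSpace ℝ (Fin m)} {R : ℝ}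
    (ha : ∀ i, ‖a i‖ ≤ R) {x : ℕ → Fin n → ℝ} (hx0 : x 0 ∈ stdSimplex ℝ (Fin n))
    (hstep : ∀ k, VNAwayStep a (x k) (x (k + 1)) (comb a (x k))) {k : ℕ} (hk : 1 ≤ k)
    (hneg : ∀ i < k, ∃ j, ⟪a j, comb a (x i)⟫ ≤ 0) :
    ‖comb a (x k)‖ ^ 2 ≤ max 8 ((Function.support (x 0)).ncard : ℝ) * R ^ 2 / k := by
  have hx : ∀ k, x k ∈ stdSimplex ℝ (Fin n) :=
    Nat.rec hx0 fun k hxk ↦ (hstep k).mem_stdSimplex hxk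
  have hC : 2 * (2 * R) ^ 2 ≤ max 8 ((Function.support (x 0)).ncard : ℝ) * R ^ 2 := by
    calc 2 * (2 * R) ^ 2 = 8 * R ^ 2 := by ring
      _ ≤ _ := by gcongr; exact le_max_left _ _
  have h0 : ‖comb a (x 0)‖ ^ 2 * (Function.support (x 0)).ncard ≤
      max 8 ((Function.support (x 0)).ncard : ℝ) * R ^ 2 := by
    rw [mul_comm]
    gcongr
    · exact le_max_right _ _
    · exact norm_comb_le ha hx0
  rw [le_div_iff₀ (by positivity)]
  calc ‖comb a (x k)‖ ^ 2 * k
      ≤ ‖comb a (x k)‖ ^ 2 * (k + (Function.support (x k)).ncard) := by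
        gcongr
        exact le_add_of_nonneg_right (Nat.cast_nonneg _)
    _ ≤ _ := VNAwayStep.norm_sq_mul_add_ncard_support_le hstep ha hx hC h0 hneg

/-- sublinear convergence of the von Neumann algorithm with away steps:
as long as the algorithm has not halted (each `Aᵀ y i`, `i ≤ k`, has a nonpositive
component), `‖y k‖² ≤ 8 / k`. -/
theorem stmt6 (m n : ℕ) (hn : 0 < n) (a : Fin n → EuclideanSpace ℝ (Fin m))
    (hnorm : ∀ i, ‖a i‖ = 1)
    (x : ℕ → Fin n → ℝ) (y : ℕ → EuclideanSpace ℝ (Fin m))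
    (hy : ∀ k, y k = comb a (x k))
    (hx0 : ∃ i : Fin n, x 0 = Pi.single i 1)
    (hstep : ∀ k : ℕ, VNAwayStep a (x k) (x (k + 1)) (y k)) :
    ∀ k : ℕ, 1 ≤ k → (∀ i : ℕ, i ≤ k → ∃ j : Fin n, ⟪a j, y i⟫ ≤ 0) →
      ‖y k‖ ^ 2 ≤ 8 / (k : ℝ) := by
  intro k hk hneg
  obtain ⟨i, hi⟩ := hx0
  obtain rfl : y = fun k ↦ comb a (x k) := funext hy
  simpa [hi] using stmt6_general (fun i ↦ (hnorm i).le) (hi ▸ single_mem_stdSimplex ℝ i) hstep hk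
    fun i hik ↦ hneg i hik.le
end
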